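/- Let α be a finite alphabet and let L ⊆ α* be a regular language (i.e., the language accepted by some finite-state automaton over α). Let φ : α → ℕ satisfy φ(a) ≥ 1 for every a ∈ α, extended to words by φ(a_1⋯a_m) = Σ_{j=1}^m φ(a_j). For each i ≥ 0 let c_i = #{w ∈ L : φ(w) = i} (a finite number). Then the growth series Σ_{i≥0} c_i z^i is rational: there exist polynomials P, Q ∈ ℚ[z] with Q(0) ≠ 0 such that Q(z)·Σ_{i≥0} c_i z^i = P(z) as formal power series over ℚ. -/

import Mathlib

/-!
Split a nonempty word into its first letter and the rest: the growth series `F s` of the languages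
accepted from the states `s` of a DFA then satisfy
`F s = [s is accepting] + ∑ a, X ^ φ a * F (step s a)`, that is, `(1 - B) F = v` with a polynomial
matrix `B` and a polynomial vector `v`. Multiplying by the adjugate of `1 - B` exhibits
`det (1 - B)` as a common denominator. All weights being positive, `B` vanishes at `X = 0`, so this
denominator has constant coefficient `1`.
-/

open scoped Matrix Polynomial PowerSeries

section LinearSystems

variable {n R S : Type*} [Fintype n] [CommRing R] [CommRing S]

theorem map_det_smul_eq_map_adjugate_mulVec [DecidableEq n] (f : R →+* S) {A : Matrix n n R}
    {b : n → R} {x : n → S} (h : A.map f *ᵥ x = f ∘ b) : f A.det • x = f ∘ (A.adjugate *ᵥ b) := by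
  have map_adjugate : (A.map f).adjugate = A.adjugate.map f := (f.map_adjugate A).symm
  calc f A.det • x = (A.map f).det • x := by rw [f.map_det, f.mapMatrix_apply]
    _ = (A.map f).adjugate *ᵥ (A.map f *ᵥ x) := by
      rw [Matrix.mulVec_mulVec, Matrix.adjugate_mul, Matrix.smul_mulVec, Matrix.one_mulVec]
    _ = A.adjugate.map f *ᵥ (f ∘ b) := by rw [map_adjugate, h]
    _ = f ∘ (A.adjugate *ᵥ b) := funext fun i => (f.map_mulVec A.adjugate b i).symm

theorem coeff_zero_det_one_sub [DecidableEq n] {B : Matrix n n R[X]}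
    (hB : ∀ i j, (B i j).coeff 0 = 0) : (1 - B).det.coeff 0 = 1 := by
  have constant_term_eq_zero : Polynomial.constantCoeff.mapMatrix B = 0 := Matrix.ext hB
  rw [← Polynomial.constantCoeff_apply, RingHom.map_det, map_sub, map_one,
    constant_term_eq_zero, sub_zero, Matrix.det_one]

theorem exists_polynomial_mul_eq_of_eq_add_mulVec {B : Matrix n n R[X]}
    (hB : ∀ i j, (B i j).coeff 0 = 0) {v : n → R[X]} {F : n → R⟦X⟧}
    (hF : ∀ i, F i = v i + ∑ j, (B i j : R⟦X⟧) * F j) :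
    ∃ Q : R[X], Q.coeff 0 = 1 ∧ ∀ i, ∃ P : R[X], (Q : R⟦X⟧) * F i = P := by
  classical
  let c : R[X] →+* R⟦X⟧ := Polynomial.coeToPowerSeries.ringHom
  have system : (1 - B).map c *ᵥ F = c ∘ v := by
    have map_one_sub : (1 - B).map c = 1 - B.map c := by
      simpa only [map_one, RingHom.mapMatrix_apply] using map_sub c.mapMatrix 1 B
    rw [map_one_sub, Matrix.sub_mulVec, Matrix.one_mulVec, sub_eq_iff_eq_add]
    exact funext hF
  have cramer := map_det_smul_eq_map_adjugate_mulVec c system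
  exact ⟨(1 - B).det, coeff_zero_det_one_sub hB,
    fun i => ⟨((1 - B).adjugate *ᵥ v) i, congrFun cramer i⟩⟩

end LinearSystems

section Words

variable {α : Type*}

theorem finite_setOf_sum_map_eq [Finite α] {φ : α → ℕ} (hφ : ∀ a, 1 ≤ φ a) (i : ℕ) :
    {w : List α | (w.map φ).sum = i}.Finite := by
  refine (List.finite_length_le α i).subset fun w hw => ?_
  calc w.length = (w.map φ).length := (List.length_map φ).symm
    _ ≤ (w.map φ).sum := List.length_le_sum_of_one_le _ (by simpa using fun a _ => hφ a)
    _ = i := hw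

theorem card_words_eq_nil_add_sum_cons [Fintype α] (p : List α → Prop) [Decidable (p [])]
    [Finite {w // p w}] :
    Nat.card {w // p w} = (if p [] then 1 else 0) + ∑ a, Nat.card {w // p (a :: w)} := by
  let e : {w // p w} ≃ PLift (p []) ⊕ Σ a, {w // p (a :: w)} :=
    { toFun
        | ⟨[], h⟩ => .inl ⟨h⟩
        | ⟨a :: w, h⟩ => .inr ⟨a, w, h⟩
      invFun
        | .inl h => ⟨[], h.down⟩
        | .inr ⟨a, w, h⟩ => ⟨a :: w, h⟩
      left_inv := by rintro ⟨_ | ⟨a, w⟩, h⟩ <;> rfl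
      right_inv := by rintro (_ | ⟨a, w, h⟩) <;> rfl }
  have (a : α) : Finite {w // p (a :: w)} :=
    Finite.of_injective (fun w => (⟨a :: w, w.2⟩ : {w // p w})) fun v w h => by
      simpa [Subtype.ext_iff] using h
  rw [Nat.card_congr e, Nat.card_sum, Nat.card_sigma]
  congr 1
  split_ifs with h <;> simp [h]

theorem leftQuotient_acceptsFrom {σ : Type*} (M : DFA α σ) (s : σ) (x : List α) :
    (M.acceptsFrom s).leftQuotient x = M.acceptsFrom (M.evalFrom s x) := by
  ext y
  rw [Language.mem_leftQuotient, DFA.mem_acceptsFrom, DFA.mem_acceptsFrom, DFA.evalFrom_of_append]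

end Words

section GrowthSeries

variable {α σ : Type*} (R : Type*)

/-- The growth series `∑ cᵢ Xⁱ` of `L` with respect to the letter weights `φ`, where `cᵢ` is the
number of words of weight `i` in `L`. By the convention of `Nat.card`, `cᵢ = 0` if there are
infinitely many such words. -/
noncomputable def growthSeries [Semiring R] (φ : α → ℕ) (L : Language α) : R⟦X⟧ :=
  PowerSeries.mk fun i => (Nat.card {w : List α // w ∈ L ∧ (w.map φ).sum = i} : R)

theorem growthSeries_eq_nil_add_sum_leftQuotient [Semiring R] [Fintype α] (φ : α → ℕ)
    (L : Language α) [Decidable ([] ∈ L)]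
    (hfin : ∀ i, Finite {w : List α // w ∈ L ∧ (w.map φ).sum = i}) :
    growthSeries R φ L = (if [] ∈ L then 1 else 0) +
      ∑ a, PowerSeries.X ^ φ a * growthSeries R φ (L.leftQuotient [a]) := by
  have card_cons (a : α) (i : ℕ) :
      Nat.card {w // a :: w ∈ L ∧ ((a :: w).map φ).sum = i} =
        if φ a ≤ i then Nat.card {w // w ∈ L.leftQuotient [a] ∧ (w.map φ).sum = i - φ a}
        else 0 := by
    simp only [List.map_cons, List.sum_cons, Language.mem_leftQuotient, List.singleton_append]
    split_ifs with h
    · have weight_tail (w : List α) :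
          φ a + (w.map φ).sum = i ↔ (w.map φ).sum = i - φ a := by omega
      simp only [weight_tail]
    · have : IsEmpty {w // a :: w ∈ L ∧ φ a + (w.map φ).sum = i} := ⟨fun w => by grind⟩
      exact Nat.card_of_isEmpty
  ext i
  rw [growthSeries, PowerSeries.coeff_mk, card_words_eq_nil_add_sum_cons, map_add, map_sum]
  push_cast
  congr 1
  · by_cases h : [] ∈ L <;> simp [h, PowerSeries.coeff_one, eq_comm]
  · refine Finset.sum_congr rfl fun a _ => ?_
    rw [card_cons, PowerSeries.coeff_X_pow_mul', growthSeries, PowerSeries.coeff_mk]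
    split_ifs <;> simp

/-- The weighted transition matrix of `M`: its `(s, t)` entry is the sum of `X ^ φ a` over the
letters `a` leading from `s` to `t`. -/
noncomputable def transitionMatrix [Semiring R] [Fintype α] [DecidableEq σ] (M : DFA α σ)
    (φ : α → ℕ) : Matrix σ σ R[X] :=
  .of fun s t => ∑ a with M.step s a = t, Polynomial.X ^ φ a

theorem coeff_zero_transitionMatrix [Semiring R] [Fintype α] [DecidableEq σ] (M : DFA α σ)
    {φ : α → ℕ} (hφ : ∀ a, 1 ≤ φ a) (s t : σ) : (transitionMatrix R M φ s t).coeff 0 = 0 := by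
  rw [transitionMatrix, Matrix.of_apply, Polynomial.finsetSum_coeff]
  refine Finset.sum_eq_zero fun a _ => ?_
  rw [Polynomial.coeff_X_pow, if_neg (Nat.one_le_iff_ne_zero.mp (hφ a)).symm]

theorem sum_transitionMatrix_mul [CommSemiring R] [Fintype α] [Fintype σ] [DecidableEq σ]
    (M : DFA α σ) (φ : α → ℕ) (F : σ → R⟦X⟧) (s : σ) :
    ∑ t, (transitionMatrix R M φ s t : R⟦X⟧) * F t =
      ∑ a, PowerSeries.X ^ φ a * F (M.step s a) := by
  have coe_entry (t : σ) : (transitionMatrix R M φ s t : R⟦X⟧) =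
      ∑ a with M.step s a = t, PowerSeries.X ^ φ a := by
    rw [transitionMatrix, Matrix.of_apply, ← Polynomial.coeToPowerSeries.ringHom_apply, map_sum]
    simp
  calc ∑ t, (transitionMatrix R M φ s t : R⟦X⟧) * F t
      = ∑ t, ∑ a with M.step s a = t, PowerSeries.X ^ φ a * F (M.step s a) := by
        refine Finset.sum_congr rfl fun t _ => ?_
        rw [coe_entry, Finset.sum_mul]
        refine Finset.sum_congr rfl fun a ha => ?_
        rw [(Finset.mem_filter.mp ha).2]
    _ = ∑ a, PowerSeries.X ^ φ a * F (M.step s a) := Finset.sum_fiberwise ..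

theorem growthSeries_acceptsFrom [CommSemiring R] [Fintype α] [Fintype σ] [DecidableEq σ]
    (M : DFA α σ) {φ : α → ℕ} (hφ : ∀ a, 1 ≤ φ a) (s : σ) [Decidable (s ∈ M.accept)] :
    growthSeries R φ (M.acceptsFrom s) = ((if s ∈ M.accept then 1 else 0 : R[X]) : R⟦X⟧) +
      ∑ t, (transitionMatrix R M φ s t : R⟦X⟧) * growthSeries R φ (M.acceptsFrom t) := by
  have hfin (i : ℕ) : Finite {w // w ∈ M.acceptsFrom s ∧ (w.map φ).sum = i} :=
    ((finite_setOf_sum_map_eq hφ i).subset fun _ hw => hw.2).to_subtype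
  let : Decidable ([] ∈ M.acceptsFrom s) := inferInstanceAs (Decidable (s ∈ M.accept))
  rw [sum_transitionMatrix_mul R M φ fun t => growthSeries R φ (M.acceptsFrom t),
    growthSeries_eq_nil_add_sum_leftQuotient R φ _ hfin]
  simp only [leftQuotient_acceptsFrom, DFA.evalFrom_singleton, DFA.mem_acceptsFrom,
    DFA.evalFrom_nil, apply_ite ((↑) : R[X] → R⟦X⟧), Polynomial.coe_one, Polynomial.coe_zero]

theorem regular_language_rational_growth_general [CommRing R] [Finite α] {L : Language α}
    (hL : L.IsRegular) {φ : α → ℕ} (hφ : ∀ a, 1 ≤ φ a) :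
    ∃ P Q : R[X], Q.coeff 0 = 1 ∧ (Q : R⟦X⟧) * growthSeries R φ L = P := by
  classical
  have := Fintype.ofFinite α
  obtain ⟨σ, _, M, rfl⟩ := hL
  obtain ⟨Q, coeff_zero_Q, rational⟩ := exists_polynomial_mul_eq_of_eq_add_mulVec
    (coeff_zero_transitionMatrix R M hφ) fun s => growthSeries_acceptsFrom R M hφ s
  obtain ⟨P, hP⟩ := rational M.start
  exact ⟨P, Q, coeff_zero_Q, hP⟩

end GrowthSeries

/-- Theorem 3.7: the growth series of a regular language, with respect to any weighting
`φ` with `φ(a) ≥ 1` for all letters `a`, is a rational function. -/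
theorem regular_language_rational_growth
    {α : Type} [Fintype α] (L : Language α)
    (hreg : ∃ (σ : Type) (_ : Fintype σ) (M : DFA α σ), M.accepts = L)
    (φ : α → ℕ) (hφ : ∀ a, 1 ≤ φ a) :
    ∃ P Q : Polynomial ℚ, Q.coeff 0 ≠ 0 ∧
      (Q : PowerSeries ℚ) *
          PowerSeries.mk
            (fun i => (Nat.card {w : List α // w ∈ L ∧ (w.map φ).sum = i} : ℚ)) =
        (P : PowerSeries ℚ) := by
  obtain ⟨P, Q, coeff_zero_Q, h⟩ := regular_language_rational_growth_general ℚ hreg hφ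
  exact ⟨P, Q, by simp [coeff_zero_Q], h⟩
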